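/- Let λ be a colored ℓ-multi-partition with coloring p : {1,…,ℓ} → ℤ/n, let ξ be a slope datum, let r = (k;i,j) be a removable ī-node of λ and a = (k′;i′,j′) an addable ī-node of λ with h^ξ(r) + ξ_Ω + ξ_Ω̄ > h^ξ(a) > h^ξ(r). If j ≥ j′, then (i,j′) ∈ λ(k) and the triple ((i,j′), k, k′) is ξ-illegal for λ. -/

import Mathlib

/-!
The arm of a box `(i, j)` in `λ(s)` measures how far it is from the last box `(i, λ(s)_i)` of its
row, and its leg with respect to `λ(t)` how far it is from the position `(λ(t)'_j + 1, j)` just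
below its column. Hence the congruence in the definition of an illegal triple compares the colors
of these two nodes, and its inequalities compare their heights. A removable node is the last box of
its row, and an addable node sits just below its column.
-/

open scoped Classical

/-- A partition: `part m` is the `(m+1)`-st part, i.e. `λ_{m+1}`. -/
structure Ptn where
  part : ℕ → ℕ
  antitone' : ∀ i j : ℕ, i ≤ j → part j ≤ part i
  finite' : ∃ N : ℕ, ∀ i ≥ N, part i = 0

namespace Ptn

/-- `λ_i`, for `i ≥ 1`. -/
def row (q : Ptn) (i : ℕ) : ℕ := q.part (i - 1)

/-- Membership of the box `(i,j)` (boxes have `i, j ≥ 1`). -/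
def mem (q : Ptn) (i j : ℕ) : Prop := 1 ≤ i ∧ 1 ≤ j ∧ j ≤ q.row i

/-- The dual partition `λ'_j = #{i ≥ 1 : λ_i ≥ j}`. -/
noncomputable def dual (q : Ptn) (j : ℕ) : ℕ := Nat.card {i : ℕ // 1 ≤ i ∧ j ≤ q.row i}

/-- `arm_λ(i,j) = λ_i - j`. -/
def arm (q : Ptn) (i j : ℕ) : ℤ := (q.row i : ℤ) - (j : ℤ)

/-- `leg_λ(i,j) = λ'_j - i`. -/
noncomputable def leg (q : Ptn) (i j : ℕ) : ℤ := (q.dual j : ℤ) - (i : ℤ)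

/-- `(i,j)` is an addable node of `q`. -/
def Addable (q : Ptn) (i j : ℕ) : Prop :=
  1 ≤ i ∧ 1 ≤ j ∧ q.row i = j - 1 ∧ (i = 1 ∨ j ≤ q.row (i - 1))

/-- `(i,j)` is a removable node of `q`. -/
def Removable (q : Ptn) (i j : ℕ) : Prop :=
  1 ≤ i ∧ 1 ≤ j ∧ q.row i = j ∧ q.row (i + 1) < j

/-- The partition obtained by adding the box `(i,j)` (when `(i,j)` is addable). -/
noncomputable def addBox (q : Ptn) (i j : ℕ) : Ptn :=
  if h : ∃ q' : Ptn, ∀ m : ℕ, q'.part m = if m = i - 1 then j else q.part m then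
    h.choose else q

/-- The partition obtained by removing the box `(i,j)` (when `(i,j)` is removable). -/
noncomputable def removeBox (q : Ptn) (i j : ℕ) : Ptn :=
  if h : ∃ q' : Ptn, ∀ m : ℕ, q'.part m = if m = i - 1 then j - 1 else q.part m then
    h.choose else q

/-- The empty partition. -/
def empty : Ptn := ⟨fun _ => 0, fun _ _ _ => le_rfl, ⟨0, fun _ _ => rfl⟩⟩

end Ptn
/-- Nodes (triples) `(k; i, j)`. -/
abbrev Node (l : ℕ) := Fin l × ℕ × ℕ

/-- Multi-partitions with `l` components. -/
abbrev MP (l : ℕ) := Fin l → Ptn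

/-- The color `p(k) - i + j` of the triple `(k;i,j)`. -/
def colorOf (n l : ℕ) (p : Fin l → ZMod n) (x : Node l) : ZMod n :=
  p x.1 - (x.2.1 : ZMod n) + (x.2.2 : ZMod n)

/-- `(k;i,j)` is a box of the multi-partition `lam`. -/
def IsBox (l : ℕ) (lam : MP l) (x : Node l) : Prop := (lam x.1).mem x.2.1 x.2.2

/-- `(k;i,j)` is an addable `ib`-node of `lam`. -/
def IsAdd (n l : ℕ) (lam : MP l) (p : Fin l → ZMod n) (ib : ZMod n) (x : Node l) : Prop :=
  (lam x.1).Addable x.2.1 x.2.2 ∧ colorOf n l p x = ib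

/-- `(k;i,j)` is a removable `ib`-node of `lam`. -/
def IsRem (n l : ℕ) (lam : MP l) (p : Fin l → ZMod n) (ib : ZMod n) (x : Node l) : Prop :=
  (lam x.1).Removable x.2.1 x.2.2 ∧ colorOf n l p x = ib

/-- Add the box `x` to the multi-partition `lam`. -/
noncomputable def MPadd {l : ℕ} (lam : MP l) (x : Node l) : MP l :=
  Function.update lam x.1 ((lam x.1).addBox x.2.1 x.2.2)

/-- Remove the box `x` from the multi-partition `lam`. -/
noncomputable def MPremove {l : ℕ} (lam : MP l) (x : Node l) : MP l :=
  Function.update lam x.1 ((lam x.1).removeBox x.2.1 x.2.2)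

/-- The empty multi-partition. -/
def MPempty (l : ℕ) : MP l := fun _ => Ptn.empty

/-- A slope datum `(ξ_Ω, ξ_Ω̄, ξ_1, …, ξ_l)` of positive reals. -/
structure Slope (l : ℕ) where
  xiO : ℝ
  xiObar : ℝ
  xi : Fin l → ℝ
  xiO_pos : 0 < xiO
  xiObar_pos : 0 < xiObar
  xi_pos : ∀ k, 0 < xi k

namespace Slope

/-- The height `h^ξ(k;i,j) = ξ_k + ξ_Ω i + ξ_Ω̄ j`. -/
def h {l : ℕ} (ξ : Slope l) (x : Node l) : ℝ :=
  ξ.xi x.1 + ξ.xiO * (x.2.1 : ℝ) + ξ.xiObar * (x.2.2 : ℝ)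

/-- `ξ` is general: distinct triples have distinct heights. -/
def General {l : ℕ} (ξ : Slope l) : Prop :=
  ∀ x y : Node l, 1 ≤ x.2.1 → 1 ≤ x.2.2 → 1 ≤ y.2.1 → 1 ≤ y.2.2 → ξ.h x = ξ.h y → x = y

/-- `ξ` is aligned: `|ξ_s - ξ_t| < ξ_Ω + ξ_Ω̄` for all `s, t`. -/
def Aligned {l : ℕ} (ξ : Slope l) : Prop :=
  ∀ s t : Fin l, |ξ.xi s - ξ.xi t| < ξ.xiO + ξ.xiObar

/-- `ξ` is integral: all entries are (positive) integers. -/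
def Integral {l : ℕ} (ξ : Slope l) : Prop :=
  (∃ m : ℤ, ξ.xiO = (m : ℝ)) ∧ (∃ m : ℤ, ξ.xiObar = (m : ℝ)) ∧ ∀ k, ∃ m : ℤ, ξ.xi k = (m : ℝ)

end Slope
/-- The triple `((i,j), s, t)` is `ξ`-illegal for `lam`. -/
def Illegal (n l : ℕ) (lam : MP l) (p : Fin l → ZMod n) (ξ : Slope l)
    (i j : ℕ) (s t : Fin l) : Prop :=
  (lam s).mem i j ∧
  (p s - p t + (((lam s).arm i j + (lam t).leg i j + 1 : ℤ) : ZMod n) = 0) ∧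
  (-ξ.xiO < ξ.xi t - ξ.xi s + ξ.xiO * (((lam t).leg i j : ℤ) : ℝ)
      - ξ.xiObar * (((lam s).arm i j : ℤ) : ℝ)) ∧
  (ξ.xi t - ξ.xi s + ξ.xiO * (((lam t).leg i j : ℤ) : ℝ)
      - ξ.xiObar * (((lam s).arm i j : ℤ) : ℝ) < ξ.xiObar)

/-- `lam` is `ξ`-regular: no triple is `ξ`-illegal for `lam`. -/
def Regular (n l : ℕ) (lam : MP l) (p : Fin l → ZMod n) (ξ : Slope l) : Prop :=
  ∀ (i j : ℕ) (s t : Fin l), ¬ Illegal n l lam p ξ i j s t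

namespace Ptn

variable {q : Ptn} {i j : ℕ}

theorem row_antitone (q : Ptn) : Antitone q.row :=
  fun _ _ hab => q.antitone' _ _ (Nat.sub_le_sub_right hab 1)

theorem Addable.le_row_iff (h : q.Addable i j) {m : ℕ} (hm : 1 ≤ m) : j ≤ q.row m ↔ m < i := by
  obtain ⟨-, hj, hrow, habove⟩ := h
  constructor
  · intro hjm
    by_contra! him
    have : q.row m ≤ q.row i := q.row_antitone him
    omega
  · intro hmi
    have hj_le : j ≤ q.row (i - 1) := habove.resolve_left (by omega)
    exact hj_le.trans (q.row_antitone (by omega))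

theorem Addable.dual_add_one (h : q.Addable i j) : q.dual j + 1 = i := by
  have hmem (m : ℕ) : m ∈ Finset.Ico 1 i ↔ 1 ≤ m ∧ j ≤ q.row m := by
    rw [Finset.mem_Ico]
    exact and_congr_right fun hm => (h.le_row_iff hm).symm
  rw [dual, Nat.subtype_card _ hmem, Nat.card_Ico, Nat.sub_add_cancel h.1]

end Ptn

section HookEnds

variable {n l : ℕ} (lam : MP l) (i j : ℕ) (s t : Fin l)

theorem colorOf_sub_colorOf_eq_arm_add_leg (p : Fin l → ZMod n) :
    colorOf n l p (s, i, (lam s).row i) - colorOf n l p (t, (lam t).dual j + 1, j) =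
      p s - p t + (((lam s).arm i j + (lam t).leg i j + 1 : ℤ) : ZMod n) := by
  simp only [colorOf, Ptn.arm, Ptn.leg]
  push_cast
  ring

theorem Slope.h_sub_h_eq_leg_sub_arm (ξ : Slope l) :
    ξ.h (t, (lam t).dual j + 1, j) - ξ.h (s, i, (lam s).row i) =
      ξ.xi t - ξ.xi s + ξ.xiO * (((lam t).leg i j : ℤ) : ℝ)
        - ξ.xiObar * (((lam s).arm i j : ℤ) : ℝ) + ξ.xiO := by
  simp only [Slope.h, Ptn.arm, Ptn.leg]
  push_cast
  ring

end HookEnds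

theorem stmt2_general {n l : ℕ} {lam : MP l} {p : Fin l → ZMod n} {ξ : Slope l} {k k' : Fin l}
    {i j i' j' : ℕ} (hrow : (lam k).row i = j) (hcol : (lam k').dual j' + 1 = i') :
    Illegal n l lam p ξ i j' k k' ↔
      (lam k).mem i j' ∧ colorOf n l p (k, i, j) = colorOf n l p (k', i', j') ∧
        ξ.h (k, i, j) < ξ.h (k', i', j') ∧
        ξ.h (k', i', j') < ξ.h (k, i, j) + ξ.xiO + ξ.xiObar := by
  subst hrow hcol
  have hheight := ξ.h_sub_h_eq_leg_sub_arm lam i j' k k'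
  rw [Illegal, ← colorOf_sub_colorOf_eq_arm_add_leg, sub_eq_zero]
  refine and_congr_right' (and_congr_right' (and_congr ?_ ?_)) <;>
    constructor <;> intro <;> linarith

/-- with `r = (k;i,j)` removable and `a = (k';i',j')` addable (both `ib`-nodes)
satisfying `h(r) + ξ_Ω + ξ_Ω̄ > h(a) > h(r)`, if `j ≥ j'` then `(i,j') ∈ lam(k)` and the
triple `((i,j'), k, k')` is `ξ`-illegal for `lam`. -/
theorem stmt2 (n l : ℕ) (hn : 1 ≤ n) (hl : 1 ≤ l) (lam : MP l) (p : Fin l → ZMod n)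
    (ξ : Slope l) (ib : ZMod n) (k k' : Fin l) (i j i' j' : ℕ)
    (hr : IsRem n l lam p ib (k, i, j)) (ha : IsAdd n l lam p ib (k', i', j'))
    (h1 : ξ.h (k, i, j) + ξ.xiO + ξ.xiObar > ξ.h (k', i', j'))
    (h2 : ξ.h (k', i', j') > ξ.h (k, i, j)) (hj : j' ≤ j) :
    (lam k).mem i j' ∧ Illegal n l lam p ξ i j' k k' := by
  obtain ⟨⟨hi, -, hrow, -⟩, hr_color⟩ := hr
  obtain ⟨ha_addable, ha_color⟩ := ha
  have hmem : (lam k).mem i j' := ⟨hi, ha_addable.2.1, hj.trans_eq hrow.symm⟩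
  exact ⟨hmem, (stmt2_general hrow ha_addable.dual_add_one).2
    ⟨hmem, hr_color.trans ha_color.symm, h2, h1⟩⟩
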